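/- arXiv:2604.14686 — 2 statements merged into one kernel-verified Lean document; each statement's English description precedes it below -/
import Mathlib

section
/- For every odd integer n ≥ 3, the local energy of the cycle graph C_n satisfies e(C_n) = 2n. -/
open SimpleGraph Matrix Finset

noncomputable section

/-- The adjacency matrix of a simple graph over `ℝ` is Hermitian. -/
lemma adjMatrix_isHermitian {V : Type*} [Fintype V] (G : SimpleGraph V)
    [DecidableRel G.Adj] : (G.adjMatrix ℝ).IsHermitian := by
  rw [Matrix.IsHermitian, Matrix.conjTranspose_eq_transpose_of_trivial]
  exact G.isSymm_adjMatrix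

/-- The energy of a finite simple graph: the sum of the absolute values of the
eigenvalues of its adjacency matrix. -/
def graphEnergy {V : Type*} [Fintype V] [DecidableEq V] (G : SimpleGraph V) : ℝ :=
  letI := Classical.decRel G.Adj
  ∑ i, |(adjMatrix_isHermitian G).eigenvalues i|

/-- The local energy of `G` at a vertex `v`: the energy of `G` minus the energy of the
induced subgraph obtained by deleting `v`. -/
def localEnergyAt {V : Type*} [Fintype V] [DecidableEq V] (G : SimpleGraph V) (v : V) : ℝ :=
  graphEnergy G - graphEnergy (G.induce {u | u ≠ v})

/-- The local energy of `G`: the sum of the local energies at all vertices. -/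
def localEnergy {V : Type*} [Fintype V] [DecidableEq V] (G : SimpleGraph V) : ℝ :=
  ∑ v, localEnergyAt G v

end

/-!
The vectors `w ↦ z ^ w`, for `z` an `n`-th root of unity, diagonalise the adjacency matrix of `C_n`
with eigenvalues `z + z⁻¹ = 2 * re z`. For odd `n` the number `-exp (π * I / n)` is a primitive
`n`-th root of unity, so the eigenvalues of `C_n` are `± 2 * cos (π * j / n)` for `0 ≤ j < n`.
Deleting a vertex leaves the path on `n - 1` vertices, which is diagonalised by sines that vanish
just outside the path, with eigenvalues `2 * cos (π * j / n)` for `1 ≤ j < n`. The two energies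
therefore differ by the term `j = 0`, which is `2`.
-/

theorem isPrimitiveRoot_neg_of_odd {R : Type*} [CommRing R] [NoZeroDivisors R] {η : R} {n : ℕ}
    (hn : Odd n) (hη : IsPrimitiveRoot η (2 * n)) : IsPrimitiveRoot (-η) n := by
  have hpos : 0 < 2 * n := Nat.mul_pos two_pos hn.pos
  have hpow : η ^ n = -1 := (hη.pow hpos (mul_comm 2 n)).eq_neg_one_of_two_right
  obtain ⟨k, hk⟩ := hn.add_one
  have hneg : -η = (η ^ 2) ^ k := by
    rw [← pow_mul, two_mul, ← hk, pow_succ, hpow, neg_one_mul]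
  rw [hneg]
  refine (hη.pow hpos rfl).pow_of_coprime k ?_
  have hcoprime : Nat.Coprime (k + k) n := by simp [← hk]
  exact hcoprime.coprime_dvd_left (Dvd.intro_left 2 (two_mul k))

section Energy

open Polynomial

theorem charpoly_eq_prod_of_apply_basis_eq_smul {R M ι : Type*} [CommRing R] [AddCommGroup M]
    [Module R M] [Module.Finite R M] [Module.Free R M] [Fintype ι] (f : M →ₗ[R] M)
    (b : Module.Basis ι R M) {d : ι → R} (hf : ∀ i, f (b i) = d i • b i) :
    f.charpoly = ∏ i, (X - C (d i)) := by
  classical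
  have hdiag : LinearMap.toMatrix b b f = diagonal d := by
    ext i j
    rw [LinearMap.toMatrix_apply, hf, map_smul, b.repr_self, Finsupp.smul_single, smul_eq_mul,
      mul_one, Finsupp.single_apply, diagonal_apply]
    grind
  rw [← f.charpoly_toMatrix b, hdiag, charpoly_diagonal]

variable {V W : Type*} [Fintype V] [DecidableEq V] [Fintype W] [DecidableEq W]
  {G : SimpleGraph V} {H : SimpleGraph W}

theorem graphEnergy_eq_sum_abs_roots_charpoly [DecidableRel G.Adj] :
    graphEnergy G = ((G.adjMatrix ℝ).charpoly.roots.map fun x ↦ |x|).sum := by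
  rw [(adjMatrix_isHermitian G).roots_charpoly_eq_eigenvalues, Multiset.map_map, graphEnergy]
  simp only [Finset.sum, Function.comp_apply, RCLike.ofReal_real_eq_id, id_eq]
  -- `graphEnergy` is stated with the classical decidability instance.
  congr!

theorem graphEnergy_congr (e : G ≃g H) : graphEnergy G = graphEnergy H := by
  classical
  have hreindex : (G.adjMatrix ℝ).reindex e.toEquiv e.toEquiv = H.adjMatrix ℝ := by
    ext u v
    simp only [reindex_apply, submatrix_apply, adjMatrix_apply, ← e.symm.map_adj_iff]
    congr!
  rw [graphEnergy_eq_sum_abs_roots_charpoly, graphEnergy_eq_sum_abs_roots_charpoly, ← hreindex,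
    charpoly_reindex]

theorem graphEnergy_eq_sum_abs_of_linearIndependent [DecidableRel G.Adj] {K ι : Type*}
    [Field K] [Algebra ℝ K] [Fintype ι] (hcard : Fintype.card ι = Fintype.card V)
    {d : ι → ℝ} {x : ι → V → K} (hx : LinearIndependent K x)
    (hG : ∀ i, G.adjMatrix K *ᵥ x i = algebraMap ℝ K (d i) • x i) :
    graphEnergy G = ∑ i, |d i| := by
  have hmap : (G.adjMatrix ℝ).map (algebraMap ℝ K) = G.adjMatrix K := by
    ext u v
    simp [adjMatrix_apply, apply_ite]
  have hcharpoly : (G.adjMatrix ℝ).charpoly = ∏ i, (X - C (d i)) := by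
    apply Polynomial.map_injective _ (algebraMap ℝ K).injective
    let b := Module.Basis.mk hx (hx.span_eq_top_of_card_eq_finrank' (by simpa using hcard)).ge
    rw [← charpoly_map, hmap, ← charpoly_toLin',
      charpoly_eq_prod_of_apply_basis_eq_smul _ b (d := fun i ↦ algebraMap ℝ K (d i))]
    · simp [Polynomial.map_prod]
    · simpa [b] using hG
  rw [graphEnergy_eq_sum_abs_roots_charpoly, hcharpoly,
    roots_prod _ _ (prod_ne_zero_iff.mpr fun i _ ↦ X_sub_C_ne_zero (d i))]
  simp

end Energy

section Cycle

open scoped Real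

theorem adjMatrix_cycleGraph_mulVec_pow {K : Type*} [DivisionRing K] {n : ℕ} (hn : 3 ≤ n) {z : K}
    (hz : z ^ n = 1) :
    (cycleGraph n).adjMatrix K *ᵥ (fun w ↦ z ^ (w : ℕ)) =
      (z + z⁻¹) • fun w : Fin n ↦ z ^ (w : ℕ) := by
  obtain ⟨m, rfl⟩ := Nat.exists_eq_add_of_le' hn
  have hz0 : z ≠ 0 := by
    rintro rfl
    simp at hz
  have pow_succ_val (w : Fin (m + 3)) : z ^ ((w + 1 : Fin (m + 3)) : ℕ) = z * z ^ (w : ℕ) := by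
    rw [← pow_succ', Fin.val_add, ← pow_eq_pow_mod _ hz, Fin.val_one]
  have pow_pred_val (w : Fin (m + 3)) : z ^ ((w - 1 : Fin (m + 3)) : ℕ) = z⁻¹ * z ^ (w : ℕ) := by
    rw [eq_inv_mul_iff_mul_eq₀ hz0, ← pow_succ_val, sub_add_cancel]
  ext u
  have hne : u - 1 ≠ u + 1 := by
    have hone : (1 : Fin (m + 3)) + 1 ≠ 0 := ne_of_beq_false rfl
    rwa [Ne, sub_eq_iff_eq_add, add_assoc, left_eq_add]
  rw [adjMatrix_mulVec_apply, cycleGraph_neighborFinset, sum_pair hne, pow_succ_val, pow_pred_val,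
    Pi.smul_apply, smul_eq_mul, add_mul, add_comm]

theorem graphEnergy_cycleGraph {n : ℕ} (hn : 3 ≤ n) {ζ : ℂ} (hζ : IsPrimitiveRoot ζ n) :
    graphEnergy (cycleGraph n) = ∑ j ∈ range n, |2 * (ζ ^ j).re| := by
  rw [← Fin.sum_univ_eq_sum_range fun j ↦ |2 * (ζ ^ j).re|]
  refine graphEnergy_eq_sum_abs_of_linearIndependent rfl
    (x := vandermonde fun j : Fin n ↦ ζ ^ (j : ℕ)) ?_ fun j ↦ ?_
  · exact linearIndependent_rows_of_det_ne_zero <| det_vandermonde_ne_zero_iff.mpr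
      fun i j hij ↦ Fin.ext (hζ.pow_inj i.2 j.2 hij)
  · have hpow : (ζ ^ (j : ℕ)) ^ n = 1 := by rw [pow_right_comm, hζ.pow_eq_one, one_pow]
    have hnorm : ‖ζ ^ (j : ℕ)‖ = 1 := by rw [norm_pow, hζ.norm'_eq_one (by lia), one_pow]
    have heigenvalue : ζ ^ (j : ℕ) + (ζ ^ (j : ℕ))⁻¹ = algebraMap ℝ ℂ (2 * (ζ ^ (j : ℕ)).re) := by
      rw [Complex.inv_eq_conj hnorm, Complex.add_conj, Complex.coe_algebraMap]
    rw [← heigenvalue]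
    exact adjMatrix_cycleGraph_mulVec_pow hn hpow

theorem graphEnergy_cycleGraph_of_odd {n : ℕ} (hn : 3 ≤ n) (hodd : Odd n) :
    graphEnergy (cycleGraph n) = ∑ j ∈ range n, |2 * Real.cos (j * (π / n))| := by
  have hζ : IsPrimitiveRoot (-Complex.exp ((π / n : ℝ) * Complex.I)) n := by
    apply isPrimitiveRoot_neg_of_odd hodd
    convert Complex.isPrimitiveRoot_exp (2 * n) (by lia) using 2
    push_cast
    field_simp
  rw [graphEnergy_cycleGraph hn hζ]
  refine sum_congr rfl fun j _ ↦ ?_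
  have hre : (Complex.exp ((π / n : ℝ) * Complex.I) ^ j).re = Real.cos (j * (π / n)) := by
    rw [← Complex.exp_nat_mul, ← mul_assoc, ← Complex.ofReal_natCast, ← Complex.ofReal_mul,
      Complex.exp_ofReal_mul_I_re]
  rcases neg_one_pow_eq_or ℂ j with h | h <;>
    simp only [neg_pow (Complex.exp _), h, one_mul, neg_one_mul, Complex.neg_re, hre, mul_neg,
      abs_neg]

end Cycle

section Path

open scoped Real

theorem adjMatrix_pathGraph_mulVec {R : Type*} [NonAssocSemiring R] {n : ℕ}
    [DecidableRel (pathGraph n).Adj] {f : ℕ → R} (hzero : f 0 = 0) (hlast : f (n + 1) = 0) :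
    (pathGraph n).adjMatrix R *ᵥ (fun i ↦ f (i + 1)) = fun i : Fin n ↦ f i + f (i + 2) := by
  ext i
  have hleft : ∑ j : Fin n, (if j + 1 = (i : ℕ) then f (j + 1) else 0) = f i := by
    have hsum := sum_range_succ' (fun k ↦ if k = (i : ℕ) then f k else 0) n
    rw [sum_ite_eq', if_pos (mem_range.mpr (by lia)), hzero, ite_self, add_zero] at hsum
    rw [Fin.sum_univ_eq_sum_range fun k ↦ if k + 1 = (i : ℕ) then f (k + 1) else 0, hsum]
  have hright : ∑ j : Fin n, (if i + 1 = (j : ℕ) then f (j + 1) else 0) = f (i + 2) := by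
    rw [Fin.sum_univ_eq_sum_range fun k ↦ if i + 1 = k then f (k + 1) else 0, sum_ite_eq]
    split_ifs with hi
    · rfl
    · rw [show (i : ℕ) + 2 = n + 1 by grind, hlast]
  rw [← hleft, ← hright, ← sum_add_distrib]
  simp only [mulVec, dotProduct, adjMatrix_apply, pathGraph_adj, ite_mul, one_mul, zero_mul]
  refine sum_congr rfl fun j _ ↦ ?_
  grind

theorem adjMatrix_pathGraph_mulVec_sin {n : ℕ} [DecidableRel (pathGraph n).Adj] {θ : ℝ}
    (hθ : Real.sin ((n + 1 : ℕ) * θ) = 0) :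
    (pathGraph n).adjMatrix ℝ *ᵥ (fun i ↦ Real.sin ((i + 1 : ℕ) * θ)) =
      (2 * Real.cos θ) • fun i : Fin n ↦ Real.sin ((i + 1 : ℕ) * θ) := by
  rw [adjMatrix_pathGraph_mulVec (f := fun k ↦ Real.sin (k * θ)) (by simp) hθ]
  ext i
  have hsub : (i : ℝ) * θ = (i + 1 : ℕ) * θ - θ := by push_cast; ring
  have hadd : ((i + 2 : ℕ) : ℝ) * θ = (i + 1 : ℕ) * θ + θ := by push_cast; ring
  rw [hsub, hadd, Real.sin_sub, Real.sin_add, Pi.smul_apply, smul_eq_mul]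
  ring

theorem graphEnergy_pathGraph (n : ℕ) :
    graphEnergy (pathGraph n) =
      ∑ j ∈ range n, |2 * Real.cos ((j + 1 : ℕ) * (π / (n + 1 : ℕ)))| := by
  classical
  let θ (j : Fin n) : ℝ := (j + 1 : ℕ) * (π / (n + 1 : ℕ))
  let x (j i : Fin n) : ℝ := Real.sin ((i + 1 : ℕ) * θ j)
  have hmul (j : Fin n) : (n + 1 : ℕ) * θ j = (j + 1 : ℕ) * π := by
    simp only [θ]
    field_simp
  have hθ (j : Fin n) : θ j ∈ Set.Ioo 0 π := by
    refine ⟨by positivity, ?_⟩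
    have hj : ((j + 1 : ℕ) : ℝ) < (n + 1 : ℕ) := by exact_mod_cast Nat.succ_lt_succ j.2
    rw [← mul_lt_mul_iff_right₀ (show (0 : ℝ) < (n + 1 : ℕ) by positivity), hmul]
    gcongr
  have hinj : Function.Injective fun j ↦ 2 * Real.cos (θ j) := by
    intro i j hij
    have hθij : θ i = θ j := Real.injOn_cos (Set.Ioo_subset_Icc_self (hθ i))
      (Set.Ioo_subset_Icc_self (hθ j)) (mul_left_cancel₀ two_ne_zero hij)
    have hcast : ((i + 1 : ℕ) : ℝ) = (j + 1 : ℕ) := mul_right_cancel₀ (by positivity) hθij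
    exact Fin.ext (Nat.succ_injective (Nat.cast_injective hcast))
  have hx (j : Fin n) : (pathGraph n).adjMatrix ℝ *ᵥ x j = (2 * Real.cos (θ j)) • x j :=
    adjMatrix_pathGraph_mulVec_sin (by rw [hmul, Real.sin_nat_mul_pi])
  have hx0 (j : Fin n) : x j ≠ 0 := by
    intro h
    have hsin := congrFun h ⟨0, j.pos⟩
    simp only [x, zero_add, Nat.cast_one, one_mul, Pi.zero_apply] at hsin
    exact (Real.sin_pos_of_mem_Ioo (hθ j)).ne' hsin
  rw [← Fin.sum_univ_eq_sum_range
    fun j ↦ |2 * Real.cos ((j + 1 : ℕ) * (π / (n + 1 : ℕ)))|]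
  refine graphEnergy_eq_sum_abs_of_linearIndependent rfl (x := x) ?_ hx
  exact Module.End.eigenvectors_linearIndependent' (toLin' ((pathGraph n).adjMatrix ℝ)) _ hinj x
    fun j ↦ Module.End.hasEigenvector_iff.mpr
      ⟨Module.End.mem_eigenspace_iff.mpr ((toLin'_apply _ _).trans (hx j)), hx0 j⟩

/-- The path on `n` vertices is what remains of the cycle on `n + 1` vertices after deleting `v`:
the vertex `i` of the path is placed `i + 1` steps after `v` on the cycle. -/
def pathGraphIsoCycleGraphInduceNe {n : ℕ} (v : Fin (n + 1)) :
    pathGraph n ≃g (cycleGraph (n + 1)).induce {u | u ≠ v} where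
  toEquiv := (finSuccAboveEquiv 0).trans ((Equiv.addLeft v).subtypeEquiv (by simp))
  map_rel_iff' {i j} := by
    have hval (i j : Fin n) : (i.succ - j.succ).val = 1 ↔ j.val + 1 = i.val := by
      rcases le_or_gt j i with h | h
      · rw [Fin.sub_val_of_le (Fin.succ_le_succ_iff.mpr h), Fin.val_succ, Fin.val_succ]
        lia
      · rw [Fin.coe_sub_iff_lt.mpr (Fin.succ_lt_succ_iff.mpr h), Fin.val_succ, Fin.val_succ]
        lia
    simp [finSuccAboveEquiv_apply, cycleGraph_adj', pathGraph_adj, hval, or_comm]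

end Path

theorem localEnergyAt_cycleGraph_of_odd {n : ℕ} (hn : 3 ≤ n) (hodd : Odd n) (v : Fin n) :
    localEnergyAt (cycleGraph n) v = 2 := by
  obtain ⟨m, rfl⟩ := Nat.exists_eq_add_of_le' (Nat.one_le_of_lt hn)
  rw [localEnergyAt, ← graphEnergy_congr (pathGraphIsoCycleGraphInduceNe v),
    graphEnergy_cycleGraph_of_odd hn hodd, graphEnergy_pathGraph, sum_range_succ']
  simp

/-- `e(C_n) = 2n` for every odd `n ≥ 3`. -/
theorem localEnergy_cycleGraph_odd (n : ℕ) (hn : 3 ≤ n) (hodd : Odd n) :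
    localEnergy (cycleGraph n) = 2 * n := by
  rw [localEnergy, sum_congr rfl fun v _ ↦ localEnergyAt_cycleGraph_of_odd hn hodd v]
  simp [mul_comm]
end

section
/- For any finite simple graph G and any vertex v of G, the local energy of G at v satisfies E_G(v) ≤ 2√(d(v)), where d(v) is the degree of v in G. -/
/-!
The energy of a graph is the trace norm of its adjacency matrix `A`, and the trace norm of a
Hermitian matrix is dual to the `ℓ²` operator norm: `‖A‖₁` is the maximum of `|tr (S A)|` over
contractions `S`. Take `S` optimal for `A`. A compression of a contraction is a contraction, so the
part of `tr (S A)` that only involves the remaining vertices is at most the energy of the smaller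
graph. What is left is, for each deleted vertex `v`, one pairing of the row of `A` at `v` with a
row of `S` and one with a column of `S`. Rows and columns of a contraction have Euclidean norm at
most one, and the row of `A` at `v` has norm `√(d(v))`.
-/

open SimpleGraph Matrix Finset

section Contractions

open scoped Matrix.Norms.L2Operator

variable {k l m n 𝕜 : Type*} [Fintype k] [Fintype l] [Fintype m] [Fintype n] [RCLike 𝕜]

lemma l2_opNorm_le_one_of_conjTranspose_mul_self_eq_one [DecidableEq n] {P : Matrix m n 𝕜}
    (hP : Pᴴ * P = 1) : ‖P‖ ≤ 1 := by
  have one_le : ‖(1 : Matrix n n 𝕜)‖ ≤ 1 := by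
    rw [← diagonal_one, l2_opNorm_diagonal, pi_norm_le_iff_of_nonneg zero_le_one]
    exact fun _ ↦ norm_one.le
  rw [← abs_norm, abs_le_one_iff_mul_self_le_one, ← l2_opNorm_conjTranspose_mul_self, hP]
  exact one_le

lemma l2_opNorm_one_submatrix_le_one [DecidableEq m] [DecidableEq n] (e : m ↪ n) :
    ‖(1 : Matrix n n 𝕜).submatrix id e‖ ≤ 1 := by
  apply l2_opNorm_le_one_of_conjTranspose_mul_self_eq_one
  rw [conjTranspose_submatrix, conjTranspose_one, ← submatrix_mul _ _ _ _ _ Function.bijective_id,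
    mul_one, submatrix_one_embedding]

lemma l2_opNorm_submatrix_le [DecidableEq l] [DecidableEq n]
    (A : Matrix m n 𝕜) (e : k ↪ m) (f : l ↪ n) : ‖A.submatrix e f‖ ≤ ‖A‖ := by
  classical
  set P : Matrix m k 𝕜 := (1 : Matrix m m 𝕜).submatrix id e with hP
  set Q : Matrix n l 𝕜 := (1 : Matrix n n 𝕜).submatrix id f with hQ
  have compression : A.submatrix e f = Pᴴ * A * Q := by
    ext i j
    simp [hP, hQ, Matrix.mul_apply, Matrix.one_apply]
  calc ‖A.submatrix e f‖ = ‖Pᴴ * A * Q‖ := by rw [compression]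
    _ ≤ ‖P‖ * ‖A‖ * ‖Q‖ := by grw [l2_opNorm_mul, l2_opNorm_mul, l2_opNorm_conjTranspose]
    _ ≤ 1 * ‖A‖ * 1 := by gcongr <;> exact l2_opNorm_one_submatrix_le_one _
    _ = ‖A‖ := by ring

lemma sqrt_sum_norm_sq_col_le_l2_opNorm [DecidableEq n] (A : Matrix m n 𝕜) (j : n) :
    √(∑ i, ‖A i j‖ ^ 2) ≤ ‖A‖ := by
  simpa [EuclideanSpace.norm_eq] using l2_opNorm_mulVec A (EuclideanSpace.single j 1)

lemma sqrt_sum_norm_sq_row_le_l2_opNorm [DecidableEq n] (A : Matrix m n 𝕜) (i : m) :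
    √(∑ j, ‖A i j‖ ^ 2) ≤ ‖A‖ := by
  classical
  simpa [l2_opNorm_conjTranspose] using sqrt_sum_norm_sq_col_le_l2_opNorm Aᴴ i

lemma norm_apply_le_l2_opNorm [DecidableEq n] (A : Matrix m n 𝕜) (i : m) (j : n) :
    ‖A i j‖ ≤ ‖A‖ :=
  calc ‖A i j‖ ≤ √(∑ i', ‖A i' j‖ ^ 2) := Real.le_sqrt_of_sq_le <|
        single_le_sum (f := fun i' ↦ ‖A i' j‖ ^ 2) (fun _ _ ↦ by positivity) (mem_univ i)
    _ ≤ ‖A‖ := sqrt_sum_norm_sq_col_le_l2_opNorm A j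

end Contractions

section TraceNorm

open scoped Matrix.Norms.L2Operator

variable {m n 𝕜 : Type*} [Fintype m] [Fintype n] [DecidableEq n] [RCLike 𝕜] {A : Matrix n n 𝕜}

/-- The trace norm of a Hermitian matrix, the sum of the absolute values of its eigenvalues; for
the adjacency matrix of a graph this is the energy of the graph. -/
noncomputable def traceNorm (hA : A.IsHermitian) : ℝ :=
  ∑ i, |hA.eigenvalues i|

lemma traceNorm_nonneg (hA : A.IsHermitian) : 0 ≤ traceNorm hA :=
  sum_nonneg fun _ _ ↦ abs_nonneg _

lemma exists_trace_mul_eq_traceNorm (hA : A.IsHermitian) :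
    ∃ S : Matrix n n 𝕜, ‖S‖ ≤ 1 ∧ trace (S * A) = (traceNorm hA : 𝕜) := by
  set U := hA.eigenvectorUnitary
  set D : Matrix n n 𝕜 := diagonal fun i ↦ ((SignType.sign (hA.eigenvalues i) : ℝ) : 𝕜) with hD
  refine ⟨Unitary.conjStarAlgAut 𝕜 _ U D, ?_, ?_⟩
  · rw [Unitary.conjStarAlgAut_apply, ← Unitary.coe_star, CStarRing.norm_mul_coe_unitary,
      CStarRing.norm_coe_unitary_mul, l2_opNorm_diagonal, pi_norm_le_iff_of_nonneg zero_le_one]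
    intro i
    cases SignType.sign (hA.eigenvalues i) <;> simp
  · conv_lhs => rw [hA.spectral_theorem]
    rw [← map_mul, Unitary.conjStarAlgAut_apply, trace_mul_cycle, Unitary.coe_star_mul_self,
      one_mul, hD, diagonal_mul_diagonal, trace_diagonal, traceNorm, RCLike.ofReal_sum]
    refine sum_congr rfl fun i _ ↦ ?_
    rw [Function.comp_apply, ← RCLike.ofReal_mul, sign_mul_self]

lemma norm_trace_mul_le_l2_opNorm_mul_traceNorm (T : Matrix n n 𝕜) (hA : A.IsHermitian) :
    ‖trace (T * A)‖ ≤ ‖T‖ * traceNorm hA := by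
  set U := hA.eigenvectorUnitary
  set C : Matrix n n 𝕜 := star (U : Matrix n n 𝕜) * T * U with hC
  have norm_C : ‖C‖ = ‖T‖ := by
    rw [hC, CStarRing.norm_mul_coe_unitary, ← Unitary.coe_star, CStarRing.norm_coe_unitary_mul]
  have trace_eq : trace (T * A) = ∑ i, C i i * (hA.eigenvalues i : 𝕜) := by
    conv_lhs => rw [hA.spectral_theorem, Unitary.conjStarAlgAut_apply, ← mul_assoc, trace_mul_comm,
      ← mul_assoc, ← mul_assoc]
    simp only [trace, diag_apply, mul_diagonal, Function.comp_apply, hC, U]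
  calc ‖trace (T * A)‖ ≤ ∑ i, ‖C i i‖ * |hA.eigenvalues i| := by
        simpa [trace_eq] using norm_sum_le univ fun i ↦ C i i * (hA.eigenvalues i : 𝕜)
    _ ≤ ∑ i, ‖T‖ * |hA.eigenvalues i| := by
        gcongr with i
        exact norm_C ▸ norm_apply_le_l2_opNorm C i i
    _ = ‖T‖ * traceNorm hA := (mul_sum ..).symm

end TraceNorm

section Compression

open scoped Matrix.Norms.L2Operator

variable {m n 𝕜 : Type*} [Fintype m] [Fintype n] [DecidableEq n] [RCLike 𝕜]

lemma trace_mul_eq_trace_submatrix_mul_submatrix_add {R : Type*} [NonUnitalNonAssocSemiring R]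
    (S A : Matrix n n R) (e : m ↪ n) :
    trace (S * A) = trace (S.submatrix e e * A.submatrix e e) +
      ∑ v ∈ (univ.map e)ᶜ, (∑ i, S v i * A i v + ∑ i ∈ univ.map e, S i v * A v i) := by
  set I := univ.map e
  have trace_submatrix : trace (S.submatrix e e * A.submatrix e e) =
      ∑ i ∈ I, ∑ j ∈ I, S i j * A j i := by
    simp [I, trace, Matrix.mul_apply]
  have row_split (i : n) :
      ∑ j, S i j * A j i = ∑ j ∈ I, S i j * A j i + ∑ v ∈ Iᶜ, S i v * A v i :=
    (sum_add_sum_compl _ _).symm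
  calc trace (S * A)
      = ∑ i ∈ I, ∑ j, S i j * A j i + ∑ v ∈ Iᶜ, ∑ i, S v i * A i v :=
        (sum_add_sum_compl _ _).symm
    _ = ∑ i ∈ I, ∑ j ∈ I, S i j * A j i + ∑ v ∈ Iᶜ, ∑ i ∈ I, S i v * A v i +
          ∑ v ∈ Iᶜ, ∑ i, S v i * A i v := by
        rw [sum_congr rfl fun i _ ↦ row_split i, sum_add_distrib, sum_comm (s := I) (t := Iᶜ)]
    _ = _ := by rw [trace_submatrix, sum_add_distrib, add_assoc, add_comm (∑ v ∈ Iᶜ, ∑ i ∈ I, _)]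

lemma norm_sum_mul_le_sqrt_mul_sqrt (s : Finset m) (f g : m → 𝕜) :
    ‖∑ i ∈ s, f i * g i‖ ≤ √(∑ i, ‖f i‖ ^ 2) * √(∑ i, ‖g i‖ ^ 2) :=
  calc ‖∑ i ∈ s, f i * g i‖ ≤ ∑ i ∈ s, ‖f i‖ * ‖g i‖ := by
        simpa only [norm_mul] using norm_sum_le s fun i ↦ f i * g i
    _ ≤ ∑ i, ‖f i‖ * ‖g i‖ := sum_le_univ_sum_of_nonneg fun i ↦ by positivity
    _ ≤ √(∑ i, ‖f i‖ ^ 2) * √(∑ i, ‖g i‖ ^ 2) := Real.sum_mul_le_sqrt_mul_sqrt _ _ _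

lemma traceNorm_le_traceNorm_submatrix_add [DecidableEq m] {A : Matrix n n 𝕜}
    (hA : A.IsHermitian) (e : m ↪ n) :
    traceNorm hA ≤
      traceNorm (hA.submatrix e) + 2 * ∑ v ∈ (univ.map e)ᶜ, √(∑ i, ‖A v i‖ ^ 2) := by
  obtain ⟨S, hS, trace_eq⟩ := exists_trace_mul_eq_traceNorm hA
  have block_le : ‖trace (S.submatrix e e * A.submatrix e e)‖ ≤ traceNorm (hA.submatrix e) := by
    have := traceNorm_nonneg (hA.submatrix e)
    grw [norm_trace_mul_le_l2_opNorm_mul_traceNorm _ (hA.submatrix e), l2_opNorm_submatrix_le, hS,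
      one_mul]
  have norm_col_eq (v : n) : √(∑ i, ‖A i v‖ ^ 2) = √(∑ i, ‖A v i‖ ^ 2) := by
    simp only [← hA.apply v, norm_star]
  have row_le (v : n) : ‖∑ i, S v i * A i v‖ ≤ √(∑ i, ‖A v i‖ ^ 2) := by
    grw [norm_sum_mul_le_sqrt_mul_sqrt, sqrt_sum_norm_sq_row_le_l2_opNorm, hS, one_mul, norm_col_eq]
  have col_le (v : n) : ‖∑ i ∈ univ.map e, S i v * A v i‖ ≤ √(∑ i, ‖A v i‖ ^ 2) := by
    grw [norm_sum_mul_le_sqrt_mul_sqrt, sqrt_sum_norm_sq_col_le_l2_opNorm, hS, one_mul]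
  calc traceNorm hA ≤ ‖(traceNorm hA : 𝕜)‖ := by
        rw [RCLike.norm_ofReal]
        exact le_abs_self _
    _ = ‖trace (S.submatrix e e * A.submatrix e e) + ∑ v ∈ (univ.map e)ᶜ,
          (∑ i, S v i * A i v + ∑ i ∈ univ.map e, S i v * A v i)‖ := by
        rw [← trace_eq, trace_mul_eq_trace_submatrix_mul_submatrix_add S A e]
    _ ≤ traceNorm (hA.submatrix e) + ∑ v ∈ (univ.map e)ᶜ,
          (√(∑ i, ‖A v i‖ ^ 2) + √(∑ i, ‖A v i‖ ^ 2)) := by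
        grw [norm_add_le, block_le, norm_sum_le]
        gcongr with v
        grw [norm_add_le, row_le, col_le]
    _ = _ := by simp only [← two_mul, mul_sum]

end Compression

section Graph

variable {V W : Type*} [Fintype V] [Fintype W]

lemma graphEnergy_eq_traceNorm [DecidableEq V] (G : SimpleGraph V) [DecidableRel G.Adj] :
    graphEnergy G = traceNorm (adjMatrix_isHermitian G) := by
  unfold graphEnergy traceNorm
  congr!

lemma sum_norm_sq_adjMatrix_row (G : SimpleGraph V) [DecidableRel G.Adj] (v : V) :
    ∑ i, ‖G.adjMatrix ℝ v i‖ ^ 2 = G.degree v := by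
  simp [adjMatrix_apply, apply_ite, ← card_neighborFinset_eq_degree, neighborFinset_eq_filter]

lemma localEnergyAt_le_general [DecidableEq V] [DecidableEq W] {G : SimpleGraph V}
    [DecidableRel G.Adj] {H : SimpleGraph W} (f : H ↪g G) :
    graphEnergy G - graphEnergy H ≤ 2 * ∑ v ∈ (univ.map f.toEmbedding)ᶜ, √(G.degree v) := by
  classical
  rw [sub_le_iff_le_add', graphEnergy_eq_traceNorm G, graphEnergy_eq_traceNorm H]
  simpa only [sum_norm_sq_adjMatrix_row, RelEmbedding.coe_toEmbedding, f.submatrix_adjMatrix ℝ]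
    using traceNorm_le_traceNorm_submatrix_add (adjMatrix_isHermitian G) f.toEmbedding

end Graph

/-- `E_G(v) ≤ 2√(d(v))` for every vertex `v`. -/
theorem localEnergyAt_le {V : Type*} [Fintype V] [DecidableEq V] (G : SimpleGraph V)
    [DecidableRel G.Adj] (v : V) :
    localEnergyAt G v ≤ 2 * Real.sqrt (G.degree v) := by
  have compl_map : (univ.map (Embedding.induce (G := G) {u | u ≠ v}).toEmbedding)ᶜ = {v} := by
    ext u
    simp
  simpa [localEnergyAt, compl_map] using
    localEnergyAt_le_general (Embedding.induce (G := G) {u | u ≠ v})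
end
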